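/- Let N be a subgroup of GAₙ consisting of jacobian automorphisms which is normal in the group Jₙ of jacobian automorphisms (i.e. φ∘G∘φ⁻¹ ∈ N for every G ∈ N and every jacobian φ ∈ GAₙ), and suppose N contains every diagonal automorphism whose jacobian determinant equals 1. Then every tame jacobian automorphism belongs to N. -/

import Mathlib

open MvPolynomial

/-- The group `GAₙ` of polynomial automorphisms of `kⁿ`, identified with the group of
`k`-algebra automorphisms of the polynomial ring `k[X₁,…,Xₙ]`; under this identification
composition of polynomial maps corresponds to reversed composition of algebra
automorphisms: `(F∘G)* = G* ∘ F*`; in particular the polynomial map `φ∘G∘φ⁻¹`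
corresponds to the group element `φ⁻¹ * G * φ`. -/
abbrev PolyAut (k : Type*) [Field k] (n : ℕ) :=
  MvPolynomial (Fin n) k ≃ₐ[k] MvPolynomial (Fin n) k

/-- `G` is jacobian if the determinant of its jacobian matrix `(∂G*(Xᵢ)/∂Xⱼ)` equals 1. -/
def IsJacobian {k : Type*} [Field k] {n : ℕ} (G : PolyAut k n) : Prop :=
  (Matrix.of fun i j : Fin n => MvPolynomial.pderiv j (G (X i))).det = 1

/-- `G` is diagonal if `G*(Xᵢ) = cᵢ Xᵢ` with all `cᵢ ≠ 0`. -/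
def IsDiagonal {k : Type*} [Field k] {n : ℕ} (G : PolyAut k n) : Prop :=
  ∀ i : Fin n, ∃ c : k, c ≠ 0 ∧ G (X i) = C c * X i

/-- `G` is elementary if for some index `i`, `G*(Xᵢ) = Xᵢ + g` where `g` does not involve
`Xᵢ`, and `G*(Xⱼ) = Xⱼ` for `j ≠ i`. -/
def IsElementary {k : Type*} [Field k] {n : ℕ} (G : PolyAut k n) : Prop :=
  ∃ i : Fin n, ∃ g : MvPolynomial (Fin n) k, i ∉ g.vars ∧
    G (X i) = X i + g ∧ ∀ j : Fin n, j ≠ i → G (X j) = X j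

/-- `G` is affine if each `G*(Xᵢ)` has total degree at most 1. -/
def IsAffine {k : Type*} [Field k] {n : ℕ} (G : PolyAut k n) : Prop :=
  ∀ i : Fin n, (G (X i)).totalDegree ≤ 1

/-- `G` is tame if it lies in the subgroup of `GAₙ` generated by the affine and the
elementary automorphisms. -/
def IsTame {k : Type*} [Field k] {n : ℕ} (G : PolyAut k n) : Prop :=
  G ∈ Subgroup.closure {H : PolyAut k n | IsAffine H ∨ IsElementary H}

section helpers
variable {k : Type*} [Field k] {n : ℕ}

theorem polyAut_ext {F G : PolyAut k n} (h : ∀ i, F (X i) = G (X i)) : F = G := by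
  have : F.toAlgHom = G.toAlgHom := MvPolynomial.algHom_ext (fun i => by simpa using h i)
  ext1 p
  exact DFunLike.congr_fun this p

theorem polyAut_C (F : PolyAut k n) (a : k) : F (C a) = C a := by
  simpa [MvPolynomial.algebraMap_eq] using F.commutes a

theorem fix_of_vars (F : PolyAut k n) (i : Fin n) (hF : ∀ j, j ≠ i → F (X j) = X j)
    (g : MvPolynomial (Fin n) k) (hg : i ∉ g.vars) : F g = g := by
  have := MvPolynomial.hom_congr_vars (f₁ := (F : MvPolynomial (Fin n) k →+* MvPolynomial (Fin n) k))
    (f₂ := RingHom.id _) (p₁ := g) (p₂ := g) ?_ ?_ rfl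
  · simpa using this
  · ext1 a
    simp [polyAut_C]
  · intro j hj _
    have : j ≠ i := fun h => hg (h ▸ hj)
    simp [hF j this]

theorem aeval_fix (f : Fin n → MvPolynomial (Fin n) k) (i : Fin n) (hF : ∀ j, j ≠ i → f j = X j)
    (g : MvPolynomial (Fin n) k) (hg : i ∉ g.vars) : aeval f g = g := by
  have := MvPolynomial.hom_congr_vars
    (f₁ := ((aeval f : MvPolynomial (Fin n) k →ₐ[k] MvPolynomial (Fin n) k) :
      MvPolynomial (Fin n) k →+* MvPolynomial (Fin n) k))
    (f₂ := RingHom.id _) (p₁ := g) (p₂ := g) ?_ ?_ rfl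
  · simpa using this
  · ext1 a
    simp [MvPolynomial.algebraMap_eq]
  · intro j hj _
    have : j ≠ i := fun h => hg (h ▸ hj)
    simp [hF j this]

theorem exists_elem (i : Fin n) (g : MvPolynomial (Fin n) k) (hg : i ∉ g.vars) :
    ∃ E : PolyAut k n, E (X i) = X i + g ∧ ∀ j, j ≠ i → E (X j) = X j := by
  have key : ∀ g : MvPolynomial (Fin n) k, i ∉ g.vars →
      (aeval (fun j => X j + if j = i then g else 0) :
        MvPolynomial (Fin n) k →ₐ[k] MvPolynomial (Fin n) k).comp
      (aeval (fun j => X j + if j = i then -g else 0)) = AlgHom.id k _ := by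
    intro g hg
    apply MvPolynomial.algHom_ext
    intro j
    by_cases h : j = i
    · subst h
      simp only [AlgHom.comp_apply, aeval_X, if_true, map_add, map_neg, AlgHom.id_apply]
      rw [aeval_fix _ j _ g hg]
      · ring
      · intro l hl
        simp [hl]
    · simp [h]
  have hg' : i ∉ (-g).vars := by simpa using hg
  refine ⟨AlgEquiv.ofAlgHom _ _ (key g hg) (by simpa using key (-g) hg'), ?_, ?_⟩
  · simp
  · intro j hj
    simp [hj]

theorem exists_diag (c : Fin n → k) (hc : ∀ i, c i ≠ 0) :
    ∃ D : PolyAut k n, ∀ i, D (X i) = C (c i) * X i := by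
  have key : ∀ c d : Fin n → k, (∀ i, c i * d i = 1) →
      (aeval (fun j => C (c j) * X j) :
        MvPolynomial (Fin n) k →ₐ[k] MvPolynomial (Fin n) k).comp
      (aeval (fun j => C (d j) * X j)) = AlgHom.id k _ := by
    intro c d h
    apply MvPolynomial.algHom_ext
    intro j
    simp only [AlgHom.comp_apply, aeval_X, map_mul, AlgHom.id_apply, aeval_C, algebraMap_eq]
    rw [← mul_assoc, ← C_mul, mul_comm, mul_comm (d j), h]
    simp
  refine ⟨AlgEquiv.ofAlgHom _ _ (key c (fun i => (c i)⁻¹) ?_) (key (fun i => (c i)⁻¹) c ?_), ?_⟩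
  · intro i; simp [hc i]
  · intro i; simp [hc i]
  · intro i; simp

/-- jacobian matrix -/
noncomputable def jacMat (F : PolyAut k n) : Matrix (Fin n) (Fin n) (MvPolynomial (Fin n) k) :=
  Matrix.of fun i j : Fin n => MvPolynomial.pderiv j (F (X i))

theorem chain_rule (F : PolyAut k n) (p : MvPolynomial (Fin n) k) (j : Fin n) :
    pderiv j (F p) = ∑ l, F (pderiv l p) * pderiv j (F (X l)) := by
  induction p using MvPolynomial.induction_on with
  | C a => simp [polyAut_C]
  | add p q hp hq => simp [hp, hq, add_mul, Finset.sum_add_distrib]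
  | mul_X p i hp =>
    simp only [map_mul, Derivation.leibniz, hp, smul_eq_mul, map_add, add_mul,
      Finset.sum_add_distrib]
    congr 1
    · rw [Finset.sum_eq_single i]
      · simp
      · intro l _ hl
        simp [pderiv_X_of_ne hl.symm]
      · simp
    · rw [Finset.mul_sum]
      refine Finset.sum_congr rfl fun l _ => by ring

theorem jacMat_mul (F G : PolyAut k n) :
    jacMat (F * G) = (jacMat G).map F * jacMat F := by
  ext1 i j
  simp [jacMat, Matrix.mul_apply, chain_rule F (G (X i)) j]

theorem jacMat_one : jacMat (1 : PolyAut k n) = 1 := by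
  ext1 i j
  simp [jacMat, Matrix.one_apply, pderiv_X, Pi.single_apply]

theorem det_map_aut (F : PolyAut k n) (M : Matrix (Fin n) (Fin n) (MvPolynomial (Fin n) k)) :
    (M.map F).det = F M.det := by
  have := (RingHom.map_det (F : MvPolynomial (Fin n) k →+* MvPolynomial (Fin n) k) M)
  simpa [RingHom.mapMatrix_apply] using this.symm

theorem isJacobian_mul {F G : PolyAut k n} (hF : IsJacobian F) (hG : IsJacobian G) :
    IsJacobian (F * G) := by
  change (jacMat (F * G)).det = 1
  change (jacMat F).det = 1 at hF
  change (jacMat G).det = 1 at hG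
  rw [jacMat_mul, Matrix.det_mul, det_map_aut, hF, hG]
  simp

theorem elem_jacobian {E : PolyAut k n} (i : Fin n) (g : MvPolynomial (Fin n) k) (hg : i ∉ g.vars)
    (h1 : E (X i) = X i + g) (h2 : ∀ j, j ≠ i → E (X j) = X j) : IsJacobian E := by
  change (jacMat E).det = 1
  have : jacMat E = 1 + Matrix.replicateCol Unit (Pi.single i (1 : MvPolynomial (Fin n) k)) *
      Matrix.replicateRow Unit (fun j => pderiv j g) := by
    ext1 a b
    by_cases h : a = i
    · subst h
      simp [jacMat, h1, Matrix.mul_apply, Matrix.one_apply, pderiv_X, Pi.single_apply]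
    · simp [jacMat, h2 a h, Matrix.mul_apply, Matrix.one_apply, pderiv_X, Pi.single_apply, h]
  rw [this, Matrix.det_one_add_replicateCol_mul_replicateRow]
  simp [pderiv_eq_zero_of_notMem_vars hg]

theorem diag_det {D : PolyAut k n} (c : Fin n → k) (h : ∀ i, D (X i) = C (c i) * X i) :
    (jacMat D).det = C (∏ i, c i) := by
  have : jacMat D = Matrix.diagonal (fun i => C (c i)) := by
    ext1 a b
    simp [jacMat, h, Matrix.diagonal_apply, pderiv_X, Pi.single_apply]
  rw [this, Matrix.det_diagonal, map_prod]

theorem diag_monomial {D : PolyAut k n} (i : Fin n) (t : k)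
    (h : ∀ j, j ≠ i → D (X j) = C t * X j) (α : Fin n →₀ ℕ) (hα : α i = 0) (b : k) :
    D (monomial α b) = C (t ^ (∑ j ∈ α.support, α j)) * monomial α b := by
  rw [monomial_eq, map_mul, polyAut_C, Finsupp.prod, map_prod]
  have : ∀ j ∈ α.support, D (X j ^ α j) = C t ^ α j * X j ^ α j := by
    intro j hj
    have : j ≠ i := by
      rintro rfl
      simp [hα] at hj
    rw [map_pow, h j this, mul_pow]
  rw [Finset.prod_congr rfl this, Finset.prod_mul_distrib, Finset.prod_pow_eq_pow_sum, C_pow]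
  ring

theorem elem_mem [CharZero k] (hn : 2 ≤ n)
    (N : Subgroup (PolyAut k n))
    (hnormal : ∀ G ∈ N, ∀ φ : PolyAut k n, IsJacobian φ → φ⁻¹ * G * φ ∈ N)
    (hdiag : ∀ D : PolyAut k n, IsDiagonal D → IsJacobian D → D ∈ N)
    (G : PolyAut k n) (hG : IsElementary G) : G ∈ N := by
  obtain ⟨i, g, hg, h1, h2⟩ := hG
  let c : Fin n → k := fun j => if j = i then (2 ^ (n - 1))⁻¹ else 2
  have hc : ∀ j, c j ≠ 0 := by
    intro j
    by_cases h : j = i <;> simp [c, h]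
  obtain ⟨D, hD⟩ := exists_diag c hc
  have hDN : D ∈ N := by
    apply hdiag
    · exact fun j => ⟨c j, hc j, hD j⟩
    · change (jacMat D).det = 1
      rw [diag_det c hD]
      have : ∏ j, c j = 1 := by
        rw [← Finset.mul_prod_erase Finset.univ c (Finset.mem_univ i),
          Finset.prod_congr rfl (g := fun _ => (2 : k))]
        · simp [c]
        · intro j hj
          simp [c, Finset.ne_of_mem_erase hj]
      simp [this]
  have hα : ∀ α ∈ g.support, α i = 0 := by
    intro α hα
    by_contra h
    exact hg ((mem_vars_iff_mem_support i).2 ⟨α, hα, by simpa using h⟩)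
  let h : MvPolynomial (Fin n) k := ∑ α ∈ g.support,
    monomial α (coeff α g / (2 ^ ((∑ j ∈ α.support, α j) + (n - 1)) - 1))
  have hh : i ∉ h.vars := by
    intro hi
    have := vars_sum_subset _ _ hi
    rw [Finset.mem_biUnion] at this
    obtain ⟨α, ha, hb⟩ := this
    rw [mem_vars_iff_mem_support] at hb
    obtain ⟨β, hb, hi⟩ := hb
    have := support_monomial_subset hb
    rw [Finset.mem_singleton] at this
    subst this
    simp [hα _ ha] at hi
  have hDh : D h = C (2 ^ (n - 1))⁻¹ * (g + h) := by
    have hg' : g = ∑ α ∈ g.support, monomial α (coeff α g) := (support_sum_monomial_coeff g).symm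
    have e : g + h = ∑ α ∈ g.support, (monomial α (coeff α g) + 
       monomial α (coeff α g / (2 ^ ((∑ j ∈ α.support, α j) + (n - 1)) - 1))) := by
      rw [Finset.sum_add_distrib, ← hg']
    rw [e, Finset.mul_sum]
    simp only [h, map_sum]
    refine Finset.sum_congr rfl fun α ha => ?_
    rw [diag_monomial i 2 (fun j hj => by simp [hD, c, hj]) α (hα α ha), ← map_add, C_mul_monomial,
      C_mul_monomial]
    congr 1
    have : (2 : k) ^ ((∑ j ∈ α.support, α j) + (n - 1)) - 1 ≠ 0 := by
      rw [sub_ne_zero]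
      have : 2 ^ ((∑ j ∈ α.support, α j) + (n - 1)) ≠ 1 := by
        apply ne_of_gt
        exact Nat.one_lt_two_pow (by omega)
      exact_mod_cast this
    field_simp
    ring
  obtain ⟨E, hE1, hE2⟩ := exists_elem i h hh
  have hGE : G = D * ((E⁻¹)⁻¹ * D⁻¹ * E⁻¹) := by
    have : G * E * D = D * E := by
      apply polyAut_ext
      intro j
      simp only [AlgEquiv.mul_apply]
      by_cases hj : j = i
      · subst hj
        rw [hD, hE1]
        simp only [map_mul, map_add, polyAut_C, hE1, h1, hDh, hD, fix_of_vars G j h2 h hh]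
        simp only [c, if_true]
        ring
      · simp [hD, hE2 j hj, h2 j hj, polyAut_C]
    rw [inv_inv, ← mul_assoc, ← mul_assoc, ← this]
    group
  have hEj : IsJacobian E⁻¹ := by
    have hEi : ∀ j, j ≠ i → E⁻¹ (X j) = X j := by
      intro j hj
      conv_lhs => rw [← hE2 j hj]
      rw [← AlgEquiv.mul_apply]
      simp
    apply elem_jacobian i (-h) (by simpa using hh) _ hEi
    have : E⁻¹ (E (X i)) = X i := by
      rw [← AlgEquiv.mul_apply]
      simp
    rw [hE1, map_add, fix_of_vars _ i hEi h hh] at this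
    exact eq_add_neg_of_add_eq this
  rw [hGE]
  exact N.mul_mem hDN (hnormal _ (N.inv_mem hDN) _ hEj)

theorem diag_mul {D D' : PolyAut k n} (h : IsDiagonal D) (h' : IsDiagonal D') :
    IsDiagonal (D * D') := by
  intro i
  obtain ⟨c, hc, e⟩ := h i
  obtain ⟨c', hc', e'⟩ := h' i
  refine ⟨c' * c, mul_ne_zero hc' hc, ?_⟩
  simp [e', e, polyAut_C, mul_assoc]

theorem diag_one : IsDiagonal (1 : PolyAut k n) := fun i => ⟨1, one_ne_zero, by simp⟩

theorem diag_inv {D : PolyAut k n} (h : IsDiagonal D) : IsDiagonal D⁻¹ := by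
  intro i
  obtain ⟨c, hc, e⟩ := h i
  refine ⟨c⁻¹, inv_ne_zero hc, ?_⟩
  have : D⁻¹ (D (X i)) = X i := by
    rw [← AlgEquiv.mul_apply]
    simp
  rw [e, map_mul, polyAut_C] at this
  conv_rhs => rw [← this, ← mul_assoc, ← C_mul, inv_mul_cancel₀ hc]
  simp

theorem diag_vars {D : PolyAut k n} (h : IsDiagonal D) (i : Fin n) (g : MvPolynomial (Fin n) k)
    (hg : i ∉ g.vars) : i ∉ (D g).vars := by
  have e : D g = bind₁ (fun j => D (X j)) g := by
    have : (D : MvPolynomial (Fin n) k →ₐ[k] MvPolynomial (Fin n) k)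
      = bind₁ (fun j => D (X j)) := MvPolynomial.algHom_ext (fun i => by simp)
    exact DFunLike.congr_fun this g
  rw [e]
  intro hi
  obtain ⟨j, hj, hi⟩ := mem_vars_bind₁ _ _ hi
  obtain ⟨c, hc, e⟩ := h j
  rw [e] at hi
  have := vars_mul _ _ hi
  simp at this
  exact hg (this ▸ hj)

theorem diag_conj_elem {D E : PolyAut k n} (h : IsDiagonal D) (hE : IsElementary E) :
    IsElementary (D * E * D⁻¹) := by
  obtain ⟨i, g, hg, h1, h2⟩ := hE
  have hcancel : ∀ p, D (D⁻¹ p) = p := fun p => by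
    rw [← AlgEquiv.mul_apply]
    simp
  obtain ⟨c, hc, e⟩ := diag_inv h i
  refine ⟨i, C c * D g, ?_, ?_, ?_⟩
  · intro hi
    have := vars_mul _ _ hi
    simp at this
    exact diag_vars h i g hg this
  · have := hcancel (X i)
    rw [e, map_mul, polyAut_C] at this
    simp only [AlgEquiv.mul_apply, e, map_mul, polyAut_C, h1, map_add, mul_add, this]
  · intro j hj
    obtain ⟨c, hc, e⟩ := diag_inv h j
    have := hcancel (X j)
    rw [e, map_mul, polyAut_C] at this
    simp only [AlgEquiv.mul_apply, e, map_mul, polyAut_C, h2 j hj, this]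

/-- Elements all of whose diagonal conjugates lie in `N`. -/
def coreSub (N : Subgroup (PolyAut k n)) : Subgroup (PolyAut k n) where
  carrier := {H | ∀ D : PolyAut k n, IsDiagonal D → D * H * D⁻¹ ∈ N}
  one_mem' := by
    intro D _
    simp [N.one_mem]
  mul_mem' := by
    intro a b ha hb D hD
    have := N.mul_mem (ha D hD) (hb D hD)
    convert this using 1
    group
  inv_mem' := by
    intro a ha D hD
    have := N.inv_mem (ha D hD)
    convert this using 1
    group

theorem coreSub_conj (N : Subgroup (PolyAut k n)) {D H : PolyAut k n} (hD : IsDiagonal D)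
    (hH : H ∈ coreSub N) : D * H * D⁻¹ ∈ coreSub N := by
  intro D' hD'
  have := hH (D' * D) (diag_mul hD' hD)
  convert this using 1
  group

/-- Products of a diagonal automorphism and an element of `coreSub N`. -/
def bigSub (N : Subgroup (PolyAut k n)) : Subgroup (PolyAut k n) where
  carrier := {G | ∃ D H : PolyAut k n, IsDiagonal D ∧ H ∈ coreSub N ∧ G = D * H}
  one_mem' := ⟨1, 1, diag_one, one_mem _, by simp⟩
  mul_mem' := by
    rintro _ _ ⟨D, H, hD, hH, rfl⟩ ⟨D', H', hD', hH', rfl⟩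
    refine ⟨D * D', (D'⁻¹ * H * D'⁻¹⁻¹) * H', diag_mul hD hD',
      mul_mem (coreSub_conj N (diag_inv hD') hH) hH', ?_⟩
    group
  inv_mem' := by
    rintro _ ⟨D, H, hD, hH, rfl⟩
    refine ⟨D⁻¹, D * H⁻¹ * D⁻¹, diag_inv hD, coreSub_conj N hD (inv_mem hH), ?_⟩
    group

theorem affine_eq {p : MvPolynomial (Fin n) k} (hp : p.totalDegree ≤ 1) :
    p = ∑ j, C (coeff (Finsupp.single j 1) p) * X j + C (coeff 0 p) := by
  ext m
  simp only [coeff_add, coeff_sum, coeff_C_mul, coeff_C, coeff_X]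
  by_cases h0 : m = 0
  · subst h0
    simp [Finsupp.single_eq_zero]
  by_cases h1 : ∃ j, m = Finsupp.single j 1
  · obtain ⟨j, rfl⟩ := h1
    rw [Finset.sum_eq_single j]
    · simp [Ne.symm h0]
    · intro l _ hl
      have : Finsupp.single l 1 ≠ (Finsupp.single j 1 : Fin n →₀ ℕ) := by
        intro h
        exact hl (Finsupp.single_left_injective one_ne_zero h)
      simp [this]
    · simp
  · have hz : coeff m p = 0 := by
      by_contra hne
      have hd := (le_totalDegree (mem_support_iff.2 hne)).trans hp
      have hd' : m.degree ≤ 1 := hd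
      rcases Nat.le_one_iff_eq_zero_or_eq_one.1 hd' with h | h
      · exact h0 ((Finsupp.degree_eq_zero_iff m).1 h)
      · obtain ⟨j, hj⟩ := Finsupp.ne_iff.1 h0
        have hj' : Finsupp.single j 1 ≤ m := by
          rw [Finsupp.single_le_iff]
          exact Nat.one_le_iff_ne_zero.2 hj
        obtain ⟨m', rfl⟩ := exists_add_of_le hj'
        rw [map_add, Finsupp.degree_single] at h
        have : m' = 0 := (Finsupp.degree_eq_zero_iff m').1 (by omega)
        exact h1 ⟨j, by simp [this]⟩
    rw [hz, Finset.sum_eq_zero]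
    · simp [Ne.symm h0]
    · intro l _
      have : Finsupp.single l 1 ≠ m := fun h => h1 ⟨l, h.symm⟩
      simp [this]

theorem linear_exists (T : Subgroup (PolyAut k n)) (hD : ∀ D, IsDiagonal D → D ∈ T)
    (hE : ∀ E, IsElementary E → E ∈ T) (M : Matrix (Fin n) (Fin n) k) (hM : M.det ≠ 0) :
    ∃ G ∈ T, ∀ i, G (X i) = ∑ j, C (M i j) * X j := by
  refine Matrix.diagonal_transvection_induction_of_det_ne_zero
    (fun M => ∃ G ∈ T, ∀ i, G (X i) = ∑ j, C (M i j) * X j) M hM ?_ ?_ ?_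
  · intro c hc
    have hc' : ∀ i, c i ≠ 0 := by
      rw [Matrix.det_diagonal, Finset.prod_ne_zero_iff] at hc
      exact fun i => hc i (Finset.mem_univ i)
    obtain ⟨D, h⟩ := exists_diag c hc'
    refine ⟨D, hD D fun i => ⟨c i, hc' i, h i⟩, fun i => ?_⟩
    rw [h, Finset.sum_eq_single i]
    · simp
    · intro j _ hj
      simp [Matrix.diagonal_apply_ne _ hj.symm]
    · simp
  · rintro ⟨i, j, hij, c⟩
    have hv : i ∉ (C c * X j : MvPolynomial (Fin n) k).vars := by
      intro hi
      have := vars_mul _ _ hi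
      simp at this
      exact hij this
    obtain ⟨E, h1, h2⟩ := exists_elem i _ hv
    refine ⟨E, hE E ⟨i, _, hv, h1, h2⟩, fun l => ?_⟩
    simp only [Matrix.TransvectionStruct.toMatrix, Matrix.transvection, Matrix.add_apply, C_add,
      add_mul, Finset.sum_add_distrib, Matrix.one_apply, Matrix.single_apply]
    by_cases hl : l = i
    · subst hl
      simp [h1, apply_ite, ite_mul]
    · simp [h2 l hl, apply_ite, ite_mul, hl, Ne.symm hl]
  · rintro A B _ _ ⟨GA, hA, eA⟩ ⟨GB, hB, eB⟩
    refine ⟨GB * GA, mul_mem hB hA, fun i => ?_⟩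
    simp only [AlgEquiv.mul_apply, eA, map_sum, map_mul, polyAut_C, eB, Matrix.mul_apply,
      Finset.mul_sum, Finset.sum_mul]
    rw [Finset.sum_comm]
    simp only [mul_assoc]

theorem transl_exists (T : Subgroup (PolyAut k n))
    (hE : ∀ E, IsElementary E → E ∈ T) (b : Fin n → k) (s : Finset (Fin n)) :
    ∃ G ∈ T, ∀ i, G (X i) = X i + C (if i ∈ s then b i else 0) := by
  induction s using Finset.induction_on with
  | empty => exact ⟨1, one_mem _, by simp⟩
  | insert a s ha ih =>
    obtain ⟨G, hG, e⟩ := ih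
    obtain ⟨E, h1, h2⟩ := exists_elem a (C (b a)) (by simp)
    refine ⟨E * G, mul_mem (hE E ⟨a, _, by simp, h1, h2⟩) hG, fun i => ?_⟩
    rw [AlgEquiv.mul_apply, e, map_add, polyAut_C]
    by_cases hi : i = a
    · subst hi
      simp [h1, ha]
    · simp [h2 i hi, hi]

theorem affine_mem (T : Subgroup (PolyAut k n)) (hD : ∀ D, IsDiagonal D → D ∈ T)
    (hE : ∀ E, IsElementary E → E ∈ T) (F : PolyAut k n) (hF : IsAffine F) : F ∈ T := by
  let A : Matrix (Fin n) (Fin n) k := Matrix.of fun i j => coeff (Finsupp.single j 1) (F (X i))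
  have hA : ∀ i, F (X i) = ∑ j, C (A i j) * X j + C (coeff 0 (F (X i))) :=
    fun i => affine_eq (hF i)
  have hJ : jacMat F = A.map C := by
    ext1 i j
    rw [jacMat, Matrix.of_apply, hA i, map_add, map_sum, pderiv_C, Finset.sum_eq_single j]
    · simp
    · intro l _ hl
      simp [pderiv_X_of_ne hl]
    · simp
  have hdet : A.det ≠ 0 := by
    intro h0
    have h1 := congrArg Matrix.det (jacMat_mul F F⁻¹)
    have h2 : (A.map C).det = C (σ := Fin n) A.det := by
      have := (RingHom.map_det (C (σ := Fin n) (R := k)) A).symm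
      simpa [RingHom.mapMatrix_apply] using this
    rw [mul_inv_cancel, jacMat_one, Matrix.det_mul, hJ, h2, h0] at h1
    simp at h1
  obtain ⟨G, hG, eG⟩ := linear_exists T hD hE A hdet
  obtain ⟨τ, hτ, eτ⟩ := transl_exists T hE (fun i => coeff 0 (F (X i))) Finset.univ
  have : F = G * τ := by
    apply polyAut_ext
    intro i
    rw [AlgEquiv.mul_apply, eτ, map_add, polyAut_C, eG, if_pos (Finset.mem_univ i)]
    exact hA i
  rw [this]
  exact mul_mem hG hτ

end helpers

/-- Let `N` be a subgroup of `GAₙ` consisting of jacobian automorphisms which is normal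
in the group of jacobian automorphisms (i.e. `φ∘G∘φ⁻¹ ∈ N` for every `G ∈ N` and every
jacobian `φ`), and suppose `N` contains every diagonal automorphism with jacobian
determinant 1.  Then every tame jacobian automorphism belongs to `N`. -/
theorem tame_jacobian_mem (k : Type*) [Field k] [CharZero k] (n : ℕ) (hn : 2 ≤ n)
    (N : Subgroup (PolyAut k n))
    (hjac : ∀ G ∈ N, IsJacobian G)
    (hnormal : ∀ G ∈ N, ∀ φ : PolyAut k n, IsJacobian φ → φ⁻¹ * G * φ ∈ N)
    (hdiag : ∀ D : PolyAut k n, IsDiagonal D → IsJacobian D → D ∈ N) :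
    ∀ F : PolyAut k n, IsTame F → IsJacobian F → F ∈ N := by
  have hEl : ∀ E, IsElementary E → E ∈ coreSub N := by
    intro E hE D hD
    exact elem_mem hn N hnormal hdiag _ (diag_conj_elem hD hE)
  have hElB : ∀ E, IsElementary E → E ∈ bigSub N := fun E hE =>
    ⟨1, E, diag_one, hEl E hE, by simp⟩
  have hDB : ∀ D, IsDiagonal D → D ∈ bigSub N := fun D hD =>
    ⟨D, 1, hD, one_mem _, by simp⟩
  intro F hF hFJ
  have hle : Subgroup.closure {H : PolyAut k n | IsAffine H ∨ IsElementary H} ≤ bigSub N := by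
    rw [Subgroup.closure_le]
    rintro H (hH | hH)
    · exact affine_mem _ hDB hElB H hH
    · exact hElB H hH
  obtain ⟨D, H, hD, hH, rfl⟩ := hle hF
  have hHN : H ∈ N := by
    have := hH 1 diag_one
    simpa using this
  refine N.mul_mem (hdiag D hD ?_) hHN
  have := isJacobian_mul hFJ (hjac _ (N.inv_mem hHN))
  simpa using this
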